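/- Let n ≥ 2, let Ω ⊂ ℝⁿ be an open bounded set, let α ∈ [0, n], and let G ∈ L¹(Ω) be nonnegative (extended by zero outside Ω). Let ξ ∈ Ω, ρ > 0 and λ > 0, and suppose there exists z₁ ∈ B_ρ(ξ) ∩ Ω with M_α G(z₁) ≤ λ. Then for every σ > 3ⁿ, d_G^α(B_ρ(ξ) ∩ Ω; σλ) ≤ d_{χ·G}^α(B_ρ(ξ) ∩ Ω; σλ), where χ·G denotes G multiplied by the indicator function of B_{2ρ}(ξ). -/

import Mathlib

open MeasureTheory Metric Set Filter
open scoped ENNReal NNReal Topology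

noncomputable section

/-- Euclidean space `ℝⁿ`. -/
abbrev En (n : ℕ) := EuclideanSpace ℝ (Fin n)

/-- The fractional maximal function
`M_α f (x) = sup_{ρ>0} ρ^α ⨍_{B_ρ(x)} |f|`, with values in `ℝ≥0∞`. -/
noncomputable def fracMax {n : ℕ} (α : ℝ) (f : En n → ℝ) (x : En n) : ℝ≥0∞ :=
  ⨆ (ρ : ℝ) (_ : 0 < ρ),
    ENNReal.ofReal (ρ ^ α) *
      ((∫⁻ y in ball x ρ, ENNReal.ofReal |f y|) / volume (ball x ρ))

/-- Cutoff fractional maximal function `T_α^r f` (supremum over radii `ρ ≥ r`). -/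
noncomputable def fracMaxGe {n : ℕ} (α r : ℝ) (f : En n → ℝ) (x : En n) : ℝ≥0∞ :=
  ⨆ (ρ : ℝ) (_ : r ≤ ρ),
    ENNReal.ofReal (ρ ^ α) *
      ((∫⁻ y in ball x ρ, ENNReal.ofReal |f y|) / volume (ball x ρ))

/-- Fractional-maximal distribution function `d_G^α(E; λ) = |{x ∈ E : M_α G x > λ}|`. -/
noncomputable def fmd {n : ℕ} (α : ℝ) (G : En n → ℝ) (E : Set (En n)) (lam : ℝ) : ℝ≥0∞ :=
  volume {x ∈ E | ENNReal.ofReal lam < fracMax α G x}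

/-- Quasi-triangle class `Q(B)` with constant `ctil`. -/
def QuasiTriangle {n : ℕ} (ctil : ℝ) (G φ ψ : En n → ℝ) (B : Set (En n)) : Prop :=
  ∀ᵐ x ∂(volume.restrict B),
    G x ≤ ctil * (φ x + ψ x) ∧ φ x ≤ ctil * (G x + ψ x) ∧ ψ x ≤ ctil * (G x + φ x)

/-- Reverse Hölder class `RH^γ(Ω_r(ν))` with constant `C₀`. -/
def RevHolder {n : ℕ} (γ C₀ : ℝ) (Ω : Set (En n)) (φ : En n → ℝ) (ν : En n) (r : ℝ) : Prop :=
  (⨍ x in ball ν r ∩ Ω, φ x ^ γ) ^ (1 / γ) ≤ C₀ * ⨍ x in ball ν (2 * r) ∩ Ω, φ x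

/-- Local comparison (A2₁). -/
def LocalComp₁ {n : ℕ} (Ω : Set (En n)) (F G : En n → ℝ) (r₀ γ ctil C₀ : ℝ)
    (c : ℝ → ℝ) : Prop :=
  ∀ ν ∈ closure Ω, ∀ r : ℝ, 0 < r → r ≤ r₀ / 2 →
    ∃ φ ψ : En n → ℝ, Measurable φ ∧ Measurable ψ ∧
      (∀ x ∉ ball ν (2 * r) ∩ Ω, φ x = 0) ∧ (∀ x ∉ ball ν (2 * r) ∩ Ω, ψ x = 0) ∧
      QuasiTriangle ctil G φ ψ (ball ν (2 * r)) ∧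
      RevHolder γ C₀ Ω φ ν r ∧
      ∀ ε ∈ Ioo (0 : ℝ) 1,
        ⨍ x in ball ν r, ψ x
          ≤ ε * ⨍ x in ball ν (2 * r), G x + c ε * ⨍ x in ball ν (2 * r), F x

/-- Local comparison (A2₂). -/
def LocalComp₂ {n : ℕ} (Ω : Set (En n)) (F G : En n → ℝ) (r₀ ctil chat : ℝ)
    (c : ℝ → ℝ) : Prop :=
  ∀ ν ∈ closure Ω, ∀ r : ℝ, 0 < r → r ≤ r₀ / 2 →
    ∃ φ ψ : En n → ℝ, Measurable φ ∧ Measurable ψ ∧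
      (∀ x ∉ ball ν r ∩ Ω, φ x = 0) ∧ (∀ x ∉ ball ν r ∩ Ω, ψ x = 0) ∧
      QuasiTriangle ctil G φ ψ (ball ν r) ∧
      (∀ ε ∈ Ioo (0 : ℝ) 1,
        ⨍ x in ball ν r, ψ x
          ≤ ε * ⨍ x in ball ν (2 * r), G x + c ε * ⨍ x in ball ν (2 * r), F x) ∧
      ∀ᵐ x ∂(volume.restrict (ball ν r)), φ x ≤ chat * ⨍ y in ball ν (2 * r), (G y + F y)

/-- Lorentz quasi-norm `‖f‖_{L^{q,s}(Ω)}` for an `ℝ≥0∞`-valued function, `0 < s ≤ ∞`. -/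
noncomputable def lorentzNorm {n : ℕ} (q : ℝ) (s : ℝ≥0∞) (Ω : Set (En n))
    (f : En n → ℝ≥0∞) : ℝ≥0∞ :=
  if s = ∞ then
    ⨆ (lam : ℝ) (_ : 0 < lam),
      ENNReal.ofReal lam * (volume {x ∈ Ω | ENNReal.ofReal lam < f x}) ^ (1 / q)
  else
    (ENNReal.ofReal q *
      ∫⁻ lam in Ioi (0 : ℝ),
        ((ENNReal.ofReal lam) ^ q * volume {x ∈ Ω | ENNReal.ofReal lam < f x}) ^ (s.toReal / q)
          * ENNReal.ofReal lam⁻¹) ^ (1 / s.toReal)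

/-- Extension of a Young function to `ℝ≥0∞`. -/
noncomputable def PhiE (Φ : ℝ → ℝ) (t : ℝ≥0∞) : ℝ≥0∞ :=
  if t = ∞ then ∞ else ENNReal.ofReal (Φ t.toReal)

/-- Luxemburg norm of an `ℝ≥0∞`-valued function on `Ω`. -/
noncomputable def luxNorm {n : ℕ} (Φ : ℝ → ℝ) (Ω : Set (En n)) (f : En n → ℝ≥0∞) : ℝ≥0∞ :=
  sInf {τ : ℝ≥0∞ | 0 < τ ∧ ∫⁻ x in Ω, PhiE Φ (f x / τ) ≤ 1}

/-- Luxemburg norm of a real-valued function on `Ω`. -/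
noncomputable def luxNormR {n : ℕ} (Φ : ℝ → ℝ) (Ω : Set (En n)) (f : En n → ℝ) : ℝ≥0∞ :=
  luxNorm Φ Ω fun x => ENNReal.ofReal |f x|

/-- Orlicz–Lorentz norm `‖f‖_{L^Φ(q,s)(Ω)}` of an `ℝ≥0∞`-valued function. -/
noncomputable def orliczLorentzNorm {n : ℕ} (Φ : ℝ → ℝ) (q : ℝ) (s : ℝ≥0∞)
    (Ω : Set (En n)) (f : En n → ℝ≥0∞) : ℝ≥0∞ :=
  sInf {τ : ℝ≥0∞ | 0 < τ ∧ lorentzNorm q s Ω (fun x => PhiE Φ (f x / τ)) ≤ 1}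

/-- `Φ` is a Young function: nonnegative, increasing, convex, `Φ 0 = 0`, with
`Φ(μ)/μ → 0` as `μ → 0⁺` and `Φ(μ)/μ → ∞` as `μ → ∞`. -/
def IsYoung (Φ : ℝ → ℝ) : Prop :=
  (∀ μ ≥ (0 : ℝ), 0 ≤ Φ μ) ∧ MonotoneOn Φ (Ici 0) ∧ ConvexOn ℝ (Ici 0) Φ ∧ Φ 0 = 0 ∧
    Tendsto (fun μ => Φ μ / μ) (𝓝[>] 0) (𝓝 0) ∧
    Tendsto (fun μ => Φ μ / μ) atTop atTop

/-- The `Δ₂` condition. -/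
def Delta2 (Φ : ℝ → ℝ) : Prop :=
  ∃ τ ≥ (2 : ℝ), ∀ μ ≥ (0 : ℝ), Φ (2 * μ) ≤ τ * Φ μ

/-- The `∇₂` condition. -/
def Nabla2 (Φ : ℝ → ℝ) : Prop :=
  ∃ τ > (1 : ℝ), ∀ μ ≥ (0 : ℝ), Φ μ ≤ Φ (τ * μ) / (2 * τ)

/-- The quantity `Ψ_ς(ξ₁, ξ₂) = (ς² + |ξ₁|² + |ξ₂|²)^{(p-2)/2} |ξ₁ - ξ₂|²`. -/
noncomputable def PsiV {n : ℕ} (p ς : ℝ) (ξ₁ ξ₂ : En n) : ℝ :=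
  (ς ^ 2 + ‖ξ₁‖ ^ 2 + ‖ξ₂‖ ^ 2) ^ ((p - 2) / 2) * ‖ξ₁ - ξ₂‖ ^ 2

end

/-- Lemma 3.3: localization of the fractional-maximal distribution function. -/
theorem stmt_12 (n : ℕ) (hn : 2 ≤ n) (Ω : Set (En n)) (hΩo : IsOpen Ω)
    (hΩb : Bornology.IsBounded Ω)
    (α : ℝ) (hα0 : 0 ≤ α) (hα : α ≤ n)
    (G : En n → ℝ) (hGi : IntegrableOn G Ω) (hGnn : ∀ x, 0 ≤ G x)
    (hGz : ∀ x ∉ Ω, G x = 0)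
    (ξ : En n) (hξ : ξ ∈ Ω) (ρ lam : ℝ) (hρ : 0 < ρ) (hlam : 0 < lam)
    (hz : ∃ z₁ ∈ ball ξ ρ ∩ Ω, fracMax α G z₁ ≤ ENNReal.ofReal lam) :
    ∀ σ : ℝ, (3 : ℝ) ^ n < σ →
      fmd α G (ball ξ ρ ∩ Ω) (σ * lam)
        ≤ fmd α ((ball ξ (2 * ρ)).indicator G) (ball ξ ρ ∩ Ω) (σ * lam) := by
  intro σ hσ
  obtain ⟨z, ⟨hzξ, -⟩, hz⟩ := hz
  apply measure_mono
  rintro x ⟨⟨hxξ, hxΩ⟩, hx⟩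
  refine ⟨⟨hxξ, hxΩ⟩, ?_⟩
  unfold fracMax at hx
  obtain ⟨r, hx⟩ := lt_iSup_iff.1 hx
  obtain ⟨hr, hx⟩ := lt_iSup_iff.1 hx
  rw [mem_ball] at hxξ hzξ
  by_cases hrρ : r ≤ ρ
  · have hsub : ball x r ⊆ ball ξ (2 * ρ) := ball_subset_ball' (by linarith)
    refine lt_of_lt_of_le hx ?_
    have heq : ∫⁻ y in ball x r, ENNReal.ofReal |G y|
        = ∫⁻ y in ball x r, ENNReal.ofReal |(ball ξ (2 * ρ)).indicator G y| := by
      apply setLIntegral_congr_fun measurableSet_ball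
      intro y hy
      simp only [indicator_of_mem (hsub hy)]
    rw [heq]
    unfold fracMax
    exact le_iSup₂ (f := fun (r : ℝ) (_ : 0 < r) => ENNReal.ofReal (r ^ α) *
      ((∫⁻ y in ball x r, ENNReal.ofReal |(ball ξ (2 * ρ)).indicator G y|) /
        volume (ball x r))) r hr
  · exfalso
    push Not at hrρ
    have hsub : ball x r ⊆ ball z (3 * r) := by
      apply ball_subset_ball'
      have := dist_triangle_right x z ξ
      linarith
    have h3 : ENNReal.ofReal ((3 * r) ^ α) *
      ((∫⁻ y in ball z (3 * r), ENNReal.ofReal |G y|) / volume (ball z (3 * r)))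
        ≤ ENNReal.ofReal lam := by
      refine le_trans ?_ hz
      unfold fracMax
      exact le_iSup₂ (f := fun (r : ℝ) (_ : 0 < r) => ENNReal.ofReal (r ^ α) *
        ((∫⁻ y in ball z r, ENNReal.ofReal |G y|) / volume (ball z r))) (3 * r)
        (by positivity)
    have hvol : volume (ball z (3 * r)) = ENNReal.ofReal (3 ^ n) * volume (ball x r) := by
      rw [Measure.addHaar_ball_mul_of_pos volume z (by norm_num : (0:ℝ) < 3) r,
        Measure.addHaar_ball_center volume x r]
      simp
    have hc0 : ENNReal.ofReal (3 ^ n) ≠ 0 := by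
      rw [Ne, ENNReal.ofReal_eq_zero, not_le]; positivity
    have hdiv : ∀ I : ℝ≥0∞, I / volume (ball x r)
        = ENNReal.ofReal (3 ^ n) * (I / volume (ball z (3 * r))) := by
      intro I
      rw [hvol, ← mul_div_assoc, ENNReal.mul_div_mul_left _ _ hc0 ENNReal.ofReal_ne_top]
    have hfin : ENNReal.ofReal (r ^ α) *
        ((∫⁻ y in ball x r, ENNReal.ofReal |G y|) / volume (ball x r))
        ≤ ENNReal.ofReal (3 ^ n * lam) := by
      rw [hdiv, mul_left_comm, ENNReal.ofReal_mul (by positivity)]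
      refine mul_le_mul_right (le_trans ?_ h3) _
      refine mul_le_mul' (ENNReal.ofReal_le_ofReal ?_)
        (ENNReal.div_le_div_right (lintegral_mono_set hsub) _)
      exact Real.rpow_le_rpow hr.le (by linarith) hα0
    have h := hx.trans_le hfin
    refine absurd h (not_lt.2 (ENNReal.ofReal_le_ofReal ?_))
    exact mul_le_mul_of_nonneg_right hσ.le hlam.le
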